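/- Let a, b, c be pairwise coprime positive integers with c² = a² + b² + ab. Then for every integer m with m > bc − b − c, the triangle with side lengths (a·(a+2b)·m, b·(b+2a)·m, c²·m) tiles into (a+2b)·(b+2a)·m² congruent copies of the triangle with side lengths (a, b, c). -/

import Mathlib

noncomputable section

abbrev Plane := EuclideanSpace ℝ (Fin 2)

/-- The point (x, y) in the Euclidean plane. -/
def pt (x y : ℝ) : Plane := (WithLp.equiv 2 (Fin 2 → ℝ)).symm ![x, y]

/-- `Δ` is a triangle with side lengths `(p, q, r)`: the convex hull of points `P, Q, R`
with `dist Q R = p`, `dist P R = q`, `dist P Q = r`. -/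
def IsTriangle (p q r : ℝ) (Δ : Set Plane) : Prop :=
  ∃ P Q R : Plane, dist Q R = p ∧ dist P R = q ∧ dist P Q = r ∧
    Δ = convexHull ℝ {P, Q, R}

/-- `S` tiles into `N` congruent copies of the `(p, q, r)` triangle: there are isometries
`f 1, …, f N` of the plane and a triangle `Δ` with side lengths `(p, q, r)` such that
`S` is the union of the `f i '' Δ` and their interiors are pairwise disjoint. -/
def TilesInto (S : Set Plane) (N : ℕ) (p q r : ℝ) : Prop :=
  ∃ (f : Fin N → Plane ≃ᵢ Plane) (Δ : Set Plane),
    IsTriangle p q r Δ ∧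
    S = ⋃ i, f i '' Δ ∧
    ∀ i j : Fin N, i ≠ j → interior (f i '' Δ) ∩ interior (f j '' Δ) = ∅

/-!
If `n` tiles cover, up to a null set, a region whose area is that of `n` tiles, then they tile it:
there is no room for overlaps or for parts sticking out. So it suffices to find coverings with the
right number of tiles.

The hypothesis on `a, b, c` makes the angle of the tile opposite `c` equal to 120°, hence
`α + β = 60°`, and the dissection can be drawn in coordinates along two lines at 60°. Three tiles
scaled by `a`, `b`, `c` form a trapezoid with height `ab` and parallel sides `a² + b²` and `c²`;
two tiles form a parallelogram with sides `a` and `b`, so a parallelogram with sides `ab` and `n`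
is covered as soon as `n` is a combination `ia + jb` with `i, j ≥ 0` (the Frobenius problem).
Together they give all trapezoids of height `ab` and large base, and by stacking those of height
`k · ab`. A pinwheel of three such trapezoids is the equilateral triangle of side `2abm` in the
60° corner of the given triangle, and the rest of that triangle consists of three tiles scaled by
`am`, `bm` and `cm`.
-/

open MeasureTheory Set

section Covering

variable {α : Type*} [MeasureSpace α] {𝒯 : Set (Set α)} {m n : ℕ} {D D₁ D₂ : Set α}

/-- `D` is covered, up to a null set, by `n` members of the family `𝒯`. Overlaps and parts of the
pieces outside `D` are allowed: `CoveredBy.exists_tiling` excludes both once the measures match. -/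
def CoveredBy (𝒯 : Set (Set α)) (n : ℕ) (D : Set α) : Prop :=
  ∃ T : Fin n → Set α, (∀ i, T i ∈ 𝒯) ∧ volume (D \ ⋃ i, T i) = 0

namespace CoveredBy

lemma of_mem (h : D ∈ 𝒯) : CoveredBy 𝒯 1 D :=
  ⟨fun _ => D, fun _ => h, by rw [iUnion_const, sdiff_self, measure_empty]⟩

lemma of_null (h : volume D = 0) : CoveredBy 𝒯 0 D :=
  ⟨Fin.elim0, fun i => i.elim0, measure_mono_null sdiff_subset h⟩

lemma mono (h : CoveredBy 𝒯 n D₁) (hD : D ⊆ D₁) : CoveredBy 𝒯 n D := by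
  obtain ⟨T, hT, hnull⟩ := h
  exact ⟨T, hT, measure_mono_null (sdiff_subset_sdiff_left hD) hnull⟩

lemma of_subset_union (h₁ : CoveredBy 𝒯 m D₁) (h₂ : CoveredBy 𝒯 n D₂) (hD : D ⊆ D₁ ∪ D₂) :
    CoveredBy 𝒯 (m + n) D := by
  obtain ⟨T₁, hT₁, hnull₁⟩ := h₁
  obtain ⟨T₂, hT₂, hnull₂⟩ := h₂
  refine ⟨Fin.append T₁ T₂, fun i => ?_, measure_mono_null ?_ (measure_union_null hnull₁ hnull₂)⟩
  · refine Fin.addCases (fun i => ?_) (fun i => ?_) i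
    · rw [Fin.append_left]; exact hT₁ i
    · rw [Fin.append_right]; exact hT₂ i
  · rintro x ⟨hx, hxT⟩
    simp only [mem_iUnion, not_exists] at hxT
    refine (hD hx).imp (fun hx₁ => ⟨hx₁, ?_⟩) (fun hx₂ => ⟨hx₂, ?_⟩)
    · simpa only [mem_iUnion, not_exists, Fin.append_left] using fun i => hxT (Fin.castAdd n i)
    · simpa only [mem_iUnion, not_exists, Fin.append_right] using fun i => hxT (Fin.natAdd m i)

lemma image {β : Type*} [MeasureSpace β] {𝒯' : Set (Set β)} (h : CoveredBy 𝒯 n D) (g : α → β)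
    (hnull : ∀ s, volume s = 0 → volume (g '' s) = 0) (hg : ∀ T ∈ 𝒯, g '' T ∈ 𝒯') :
    CoveredBy 𝒯' n (g '' D) := by
  obtain ⟨T, hT, hD⟩ := h
  refine ⟨fun i => g '' T i, fun i => hg _ (hT i), measure_mono_null ?_ (hnull _ hD)⟩
  rw [← image_iUnion]
  rintro _ ⟨⟨x, hx, rfl⟩, hxT⟩
  exact mem_image_of_mem g ⟨hx, fun hx' => hxT (mem_image_of_mem g hx')⟩

end CoveredBy

end Covering

lemma interior_image_inter_interior_image_eq_empty {X Y : Type*} [TopologicalSpace X]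
    [TopologicalSpace Y] {g : X → Y} (hg : Continuous g) (hinj : Function.Injective g) {s t : Set X}
    (h : interior s ∩ interior t = ∅) : interior (g '' s) ∩ interior (g '' t) = ∅ := by
  have hpreimage (s : Set X) : g ⁻¹' interior (g '' s) ⊆ interior s :=
    (preimage_interior_subset_interior_preimage hg).trans_eq (by rw [hinj.preimage_image])
  refine eq_empty_of_forall_notMem fun x ⟨hs, ht⟩ => ?_
  obtain ⟨y, -, rfl⟩ := interior_subset hs
  exact h.subset ⟨hpreimage s hs, hpreimage t ht⟩

section AreaCount

lemma measure_inter_add_iUnion_le_sum {α ι : Type*} [MeasurableSpace α] [Fintype ι]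
    (μ : Measure α) {T : ι → Set α} (hT : ∀ i, MeasurableSet (T i)) {i j : ι} (hij : i ≠ j) :
    μ (T i ∩ T j) + μ (⋃ k, T k) ≤ ∑ k, μ (T k) := by
  classical
  have hcover : ⋃ k, T k ⊆ T i \ T j ∪ ⋃ k ∈ Finset.univ.erase i, T k := by
    intro x hx
    obtain ⟨k, hk⟩ := mem_iUnion.1 hx
    by_cases hki : k = i
    · subst hki
      by_cases hxj : x ∈ T j
      · exact .inr (mem_biUnion (by simpa using hij.symm) hxj)
      · exact .inl ⟨hk, hxj⟩
    · exact .inr (mem_biUnion (by simpa using hki) hk)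
  calc μ (T i ∩ T j) + μ (⋃ k, T k)
      ≤ μ (T i ∩ T j) + (μ (T i \ T j) + ∑ k ∈ Finset.univ.erase i, μ (T k)) := by
        gcongr
        exact (measure_mono hcover).trans <| (measure_union_le _ _).trans <| by
          gcongr; exact measure_biUnion_finset_le _ _
    _ = μ (T i) + ∑ k ∈ Finset.univ.erase i, μ (T k) := by
        rw [← add_assoc, measure_inter_add_sdiff _ (hT j)]
    _ = ∑ k, μ (T k) := Finset.add_sum_erase _ (fun k => μ (T k)) (Finset.mem_univ i)

variable {α : Type*} [TopologicalSpace α] [MeasurableSpace α]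

lemma subset_of_measure_sdiff_eq_zero (μ : Measure α) [μ.IsOpenPosMeasure] {A B : Set α}
    (hA : A ⊆ closure (interior A)) (hB : IsClosed B) (h : μ (A \ B) = 0) : A ⊆ B := by
  have hopen : IsOpen (interior A \ B) := isOpen_interior.sdiff hB
  have hempty : interior A \ B = ∅ := hopen.measure_eq_zero_iff μ |>.1 <|
    measure_mono_null (sdiff_subset_sdiff_left interior_subset) h
  exact hA.trans (closure_minimal (sdiff_eq_empty.1 hempty) hB)

end AreaCount

section Tiling

variable {α : Type*} [TopologicalSpace α] [MeasureSpace α] [BorelSpace α]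
  [(volume : Measure α).IsOpenPosMeasure] {𝒯 : Set (Set α)} {n : ℕ} {D : Set α}

lemma CoveredBy.exists_tiling {v : ENNReal} (h : CoveredBy 𝒯 n D) (hD : IsClosed D)
    (hDreg : D ⊆ closure (interior D)) (h𝒯 : ∀ T ∈ 𝒯, IsClosed T ∧ T ⊆ closure (interior T))
    (hvol : ∀ T ∈ 𝒯, volume T = v) (hv : v ≠ ⊤) (hDvol : volume D = n * v) :
    ∃ T : Fin n → Set α, (∀ i, T i ∈ 𝒯) ∧ D = ⋃ i, T i ∧
      ∀ i j, i ≠ j → interior (T i) ∩ interior (T j) = ∅ := by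
  obtain ⟨T, hT, hnull⟩ := h
  have hclosed : IsClosed (⋃ i, T i) := isClosed_iUnion_of_finite fun i => (h𝒯 _ (hT i)).1
  have hsub : D ⊆ ⋃ i, T i := subset_of_measure_sdiff_eq_zero volume hDreg hclosed hnull
  have hsum : ∑ i, volume (T i) = n * v := by simp [hvol _ (hT _)]
  have hfin : volume (⋃ i, T i) ≠ ⊤ := ne_top_of_le_ne_top (by finiteness)
    ((measure_iUnion_fintype_le _ _).trans_eq hsum)
  have hge : n * v ≤ volume (⋃ i, T i) := hDvol ▸ measure_mono hsub
  refine ⟨T, hT, hsub.antisymm (iUnion_subset fun i => ?_), fun i j hij => ?_⟩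
  · have hle : volume (⋃ i, T i) ≤ volume D :=
      (measure_iUnion_fintype_le _ _).trans_eq (hsum.trans hDvol.symm)
    have hdiff : volume ((⋃ i, T i) \ D) = 0 := ae_le_set.1
      (ae_eq_of_subset_of_measure_ge hsub hle hD.measurableSet.nullMeasurableSet hfin).symm.le
    exact subset_of_measure_sdiff_eq_zero volume (h𝒯 _ (hT i)).2 hD
      (measure_mono_null (sdiff_subset_sdiff_left (subset_iUnion T i)) hdiff)
  · have hoverlap : volume (T i ∩ T j) = 0 := by
      have hle := measure_inter_add_iUnion_le_sum volume
        (fun k => (h𝒯 _ (hT k)).1.measurableSet) hij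
      rw [hsum] at hle
      have hle' : volume (T i ∩ T j) + volume (⋃ k, T k) ≤ 0 + volume (⋃ k, T k) := by
        rw [zero_add]; exact hle.trans hge
      exact nonpos_iff_eq_zero.1 ((ENNReal.add_le_add_iff_right hfin).1 hle')
    exact (isOpen_interior.inter isOpen_interior).measure_eq_zero_iff volume |>.1 <|
      measure_mono_null (inter_subset_inter interior_subset interior_subset) hoverlap

end Tiling

section AffineMeasure

variable {E : Type*} [NormedAddCommGroup E] [NormedSpace ℝ E] [FiniteDimensional ℝ E]
  [MeasurableSpace E] [BorelSpace E]

lemma measure_image_affineMap (μ : Measure E) [μ.IsAddHaarMeasure] (f : E →ᵃ[ℝ] E) (s : Set E) :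
    μ (f '' s) = ENNReal.ofReal |LinearMap.det f.linear| * μ s := by
  have himage : f '' s = (· + f 0) '' (f.linear '' s) := by
    rw [image_image]
    exact image_congr fun x _ => congrFun f.decomp x
  rw [himage, image_add_right, measure_preimage_add_right, Measure.addHaar_image_linearMap]

lemma subset_closure_interior_of_convex (μ : Measure E) [μ.IsAddHaarMeasure] {s : Set E}
    (hs : Convex ℝ s) (hμ : μ s ≠ 0) : s ⊆ closure (interior s) := by
  have hne : (interior s).Nonempty := by
    by_contra hempty
    refine hμ (measure_mono_null ?_ (hs.addHaar_frontier μ))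
    rw [frontier, not_nonempty_iff_eq_empty.1 hempty, sdiff_empty]
    exact subset_closure
  rw [hs.closure_interior_eq_closure_of_nonempty_interior hne]
  exact subset_closure

end AffineMeasure

section Triangle

lemma mem_convexHull_of_weights {x y p₁ p₂ q₁ q₂ r₁ r₂ r s t w : ℝ} (hsum : r + s + t = w)
    (hw : 0 < w) (hr : 0 ≤ r) (hs : 0 ≤ s) (ht : 0 ≤ t) (hx : r * p₁ + s * q₁ + t * r₁ = w * x)
    (hy : r * p₂ + s * q₂ + t * r₂ = w * y) :
    (x, y) ∈ convexHull ℝ {(p₁, p₂), (q₁, q₂), (r₁, r₂)} := by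
  have hmem := Finset.univ.centerMass_mem_convexHull (w := ![r, s, t])
    (z := ![(p₁, p₂), (q₁, q₂), (r₁, r₂)]) (s := {(p₁, p₂), (q₁, q₂), (r₁, r₂)})
    (by simp [Fin.forall_fin_succ, hr, hs, ht])
    (by simpa [Fin.sum_univ_three, hsum] using hw) (by simp [Fin.forall_fin_succ])
  simpa [Finset.centerMass, Fin.sum_univ_three, hsum, hx, hy, hw.ne'] using hmem

/-- The affine map which places the coordinate plane in `E` with the given origin and axes. -/
def frame {E : Type*} [AddCommGroup E] [Module ℝ E] (O u v : E) : (ℝ × ℝ) →ᵃ[ℝ] E :=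
  ((LinearMap.toSpanSingleton ℝ E u).coprod (LinearMap.toSpanSingleton ℝ E v)).toAffineMap +
    AffineMap.const ℝ (ℝ × ℝ) O

lemma frame_apply {E : Type*} [AddCommGroup E] [Module ℝ E] (O u v : E) (p : ℝ × ℝ) :
    frame O u v p = p.1 • u + p.2 • v + O := by
  simp [frame]

lemma frame_linear_apply {E : Type*} [AddCommGroup E] [Module ℝ E] (O u v : E) (p : ℝ × ℝ) :
    (frame O u v).linear p = p.1 • u + p.2 • v := by
  simp [frame]

lemma frame_image_convexHull {E : Type*} [AddCommGroup E] [Module ℝ E] (O u v : E)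
    (P Q R : ℝ × ℝ) : frame O u v '' convexHull ℝ {P, Q, R} =
      convexHull ℝ {frame O u v P, frame O u v Q, frame O u v R} := by
  rw [AffineMap.image_convexHull, image_insert_eq, image_pair]

/-- The signed area of the parallelogram spanned by two vectors of the coordinate plane. -/
def cross (u v : ℝ × ℝ) : ℝ := u.1 * v.2 - u.2 * v.1

lemma det_frame_linear (O u v : ℝ × ℝ) : LinearMap.det (frame O u v).linear = cross u v := by
  rw [← LinearMap.det_toMatrix (Module.Basis.finTwoProd ℝ), Matrix.det_fin_two]
  simp [LinearMap.toMatrix_apply, frame_linear_apply, cross, mul_comm]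

/-- The right isosceles triangle with legs of length `s` along the coordinate axes; in lattice
coordinates (see `hexNormSq`) it is an equilateral triangle of side `s`. -/
def stdTriangle (s : ℝ) : Set (ℝ × ℝ) := {p | 0 ≤ p.1 ∧ 0 ≤ p.2 ∧ p.1 + p.2 ≤ s}

lemma stdTriangle_subset_convexHull {s : ℝ} (hs : 0 < s) :
    stdTriangle s ⊆ convexHull ℝ {(0, 0), (s, 0), (0, s)} := by
  rintro ⟨x, y⟩ ⟨hx, hy, hxy⟩
  have hsum : s - (x + y) + x + y = s := by ring
  exact mem_convexHull_of_weights hsum hs (sub_nonneg.2 hxy) hx hy (by ring) (by ring)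

lemma convexHull_subset_stdTriangle {s : ℝ} (hs : 0 ≤ s) :
    convexHull ℝ {(0, 0), (s, 0), (0, s)} ⊆ stdTriangle s := by
  refine convexHull_min ?_ fun p hp q hq r t hr ht hrt => ?_
  · simp [insert_subset_iff, stdTriangle, hs]
  · obtain ⟨hp₁, hp₂, hp⟩ := hp
    obtain ⟨hq₁, hq₂, hq⟩ := hq
    refine ⟨by simp only [Prod.fst_add, Prod.smul_fst, smul_eq_mul]; positivity,
      by simp only [Prod.snd_add, Prod.smul_snd, smul_eq_mul]; positivity, ?_⟩
    simp only [Prod.fst_add, Prod.smul_fst, Prod.snd_add, Prod.smul_snd, smul_eq_mul]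
    nlinarith [mul_le_mul_of_nonneg_left hp hr, mul_le_mul_of_nonneg_left hq ht]

lemma stdTriangle_eq_convexHull {s : ℝ} (hs : 0 < s) :
    stdTriangle s = convexHull ℝ {(0, 0), (s, 0), (0, s)} :=
  (stdTriangle_subset_convexHull hs).antisymm (convexHull_subset_stdTriangle hs.le)

lemma frame_image_stdTriangle {E : Type*} [AddCommGroup E] [Module ℝ E] (O u v : E) {s : ℝ}
    (hs : 0 < s) :
    frame O u v '' stdTriangle s = convexHull ℝ {O, s • u + O, s • v + O} := by
  rw [stdTriangle_eq_convexHull hs, frame_image_convexHull]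
  simp [frame_apply]

lemma volume_stdTriangle_one_ne_zero : volume (stdTriangle 1) ≠ 0 := by
  have hsub : Ioo (0 : ℝ) 2⁻¹ ×ˢ Ioo (0 : ℝ) 2⁻¹ ⊆ stdTriangle 1 := by
    rintro p ⟨⟨hx, hx'⟩, hy, hy'⟩
    exact ⟨hx.le, hy.le, by linarith⟩
  refine (lt_of_lt_of_le ?_ (measure_mono hsub)).ne'
  exact (isOpen_Ioo.prod isOpen_Ioo).measure_pos volume ⟨(4⁻¹, 4⁻¹), by norm_num⟩

lemma volume_stdTriangle_one_ne_top : volume (stdTriangle 1) ≠ ⊤ := by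
  rw [stdTriangle_eq_convexHull one_pos]
  exact ((Set.toFinite _).isCompact_convexHull ℝ).measure_ne_top

lemma volume_convexHull_triple (P Q R : ℝ × ℝ) :
    volume (convexHull ℝ {P, Q, R}) =
      ENNReal.ofReal |cross (Q - P) (R - P)| * volume (stdTriangle 1) := by
  rw [← det_frame_linear P, ← measure_image_affineMap, frame_image_stdTriangle _ _ _ one_pos]
  simp only [one_smul, sub_add_cancel]

lemma isClosed_convexHull_triple (P Q R : ℝ × ℝ) : IsClosed (convexHull ℝ {P, Q, R}) :=
  ((Set.toFinite _).isCompact_convexHull ℝ).isClosed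

lemma convexHull_triple_subset_closure_interior {P Q R : ℝ × ℝ}
    (h : cross (Q - P) (R - P) ≠ 0) :
    convexHull ℝ {P, Q, R} ⊆ closure (interior (convexHull ℝ {P, Q, R})) := by
  refine subset_closure_interior_of_convex volume (convex_convexHull ℝ _) ?_
  rw [volume_convexHull_triple]
  exact mul_ne_zero (by simpa using h) volume_stdTriangle_one_ne_zero

end Triangle

section Grid

variable {𝒯 : Set (Set (ℝ × ℝ))} {N : ℕ} {w h : ℝ}

lemma coveredBy_row (hcell : ∀ x y, CoveredBy 𝒯 N (Icc x (x + w) ×ˢ Icc y (y + h)))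
    (n : ℕ) (x y : ℝ) : CoveredBy 𝒯 (n * N) (Icc x (x + n * w) ×ˢ Icc y (y + h)) := by
  induction n with
  | zero =>
    rw [zero_mul]
    exact .of_null (by simp [Measure.volume_eq_prod])
  | succ n ih =>
    rw [Nat.succ_mul]
    refine ih.of_subset_union (hcell (x + n * w) y) ?_
    rw [← union_prod]
    refine prod_mono_left (Icc_subset_Icc_union_Icc.trans_eq' ?_)
    push_cast; ring_nf

lemma coveredBy_grid (hcell : ∀ x y, CoveredBy 𝒯 N (Icc x (x + w) ×ˢ Icc y (y + h)))
    (n k : ℕ) (x y : ℝ) :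
    CoveredBy 𝒯 (k * (n * N)) (Icc x (x + n * w) ×ˢ Icc y (y + k * h)) := by
  induction k with
  | zero =>
    rw [zero_mul]
    exact .of_null (by simp [Measure.volume_eq_prod])
  | succ k ih =>
    rw [Nat.succ_mul]
    refine ih.of_subset_union (coveredBy_row hcell n x (y + k * h)) ?_
    rw [← prod_union]
    refine prod_mono_right (Icc_subset_Icc_union_Icc.trans_eq' ?_)
    push_cast; ring_nf

end Grid

section UnitTriangles

variable {𝒯 : Set (Set (ℝ × ℝ))}

lemma coveredBy_upward_triangle
    (hup : ∀ x y : ℝ, convexHull ℝ {(x, y), (x + 1, y), (x, y + 1)} ∈ 𝒯) (x y : ℝ) :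
    CoveredBy 𝒯 1 {p : ℝ × ℝ | x ≤ p.1 ∧ y ≤ p.2 ∧ p.1 + p.2 ≤ x + y + 1} := by
  refine (CoveredBy.of_mem (hup x y)).mono fun ⟨p, q⟩ ⟨hp, hq, hpq⟩ => ?_
  dsimp only at hp hq hpq
  have hsum : (x + y + 1 - p - q) + (p - x) + (q - y) = 1 := by ring
  exact mem_convexHull_of_weights hsum one_pos (by linarith) (by linarith) (by linarith)
    (by ring) (by ring)

lemma coveredBy_downward_triangle
    (hdown : ∀ x y : ℝ, convexHull ℝ {(x + 1, y + 1), (x, y + 1), (x + 1, y)} ∈ 𝒯) (x y : ℝ) :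
    CoveredBy 𝒯 1 {p : ℝ × ℝ | p.1 ≤ x + 1 ∧ p.2 ≤ y + 1 ∧ x + y + 1 ≤ p.1 + p.2} := by
  refine (CoveredBy.of_mem (hdown x y)).mono fun ⟨p, q⟩ ⟨hp, hq, hpq⟩ => ?_
  dsimp only at hp hq hpq
  have hsum : (p + q - x - y - 1) + (x + 1 - p) + (y + 1 - q) = 1 := by ring
  exact mem_convexHull_of_weights hsum one_pos (by linarith) (by linarith) (by linarith)
    (by ring) (by ring)

lemma coveredBy_unit_square
    (hup : ∀ x y : ℝ, convexHull ℝ {(x, y), (x + 1, y), (x, y + 1)} ∈ 𝒯)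
    (hdown : ∀ x y : ℝ, convexHull ℝ {(x + 1, y + 1), (x, y + 1), (x + 1, y)} ∈ 𝒯) (x y : ℝ) :
    CoveredBy 𝒯 2 (Icc x (x + 1) ×ˢ Icc y (y + 1)) := by
  refine (coveredBy_upward_triangle hup x y).of_subset_union
    (coveredBy_downward_triangle hdown x y) ?_
  rintro p ⟨⟨hx, hx'⟩, hy, hy'⟩
  exact (le_total (p.1 + p.2) (x + y + 1)).imp (⟨hx, hy, ·⟩) (⟨hx', hy', ·⟩)

lemma coveredBy_triangle_grid
    (hup : ∀ x y : ℝ, convexHull ℝ {(x, y), (x + 1, y), (x, y + 1)} ∈ 𝒯)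
    (hdown : ∀ x y : ℝ, convexHull ℝ {(x + 1, y + 1), (x, y + 1), (x + 1, y)} ∈ 𝒯)
    (n : ℕ) (y : ℝ) :
    CoveredBy 𝒯 (n ^ 2) {p : ℝ × ℝ | 0 ≤ p.1 ∧ y ≤ p.2 ∧ p.1 + p.2 ≤ y + n} := by
  induction n generalizing y with
  | zero =>
    refine .of_null (measure_mono_null (t := {(0, y)}) ?_ (measure_singleton _))
    rintro p ⟨hx, hy, hxy⟩
    push_cast at hxy
    exact Prod.ext (by dsimp; linarith) (by dsimp; linarith)
  | succ n ih =>
    have hrow := coveredBy_row (coveredBy_unit_square hup hdown) n 0 y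
    rw [show (n + 1) ^ 2 = n ^ 2 + (n * 2 + 1) by ring]
    refine (ih (y + 1)).of_subset_union
      (hrow.of_subset_union (coveredBy_upward_triangle hup n y) subset_rfl) ?_
    rintro p ⟨hx, hy, hxy⟩
    push_cast at hxy
    rcases le_total (y + 1) p.2 with hy' | hy'
    · exact .inl ⟨hx, hy', by linarith⟩
    rcases le_total p.1 n with hx' | hx'
    · exact .inr (.inl ⟨⟨hx, by linarith⟩, hy, hy'⟩)
    · exact .inr (.inr ⟨hx', hy, by linarith⟩)

end UnitTriangles

section Tiles

/-- The squared Euclidean length of the vector `p.1 • u + p.2 • v`, where `u` and `v` are unit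
vectors at an angle of 60°. In these lattice coordinates all vertices of the dissections below are
integral. -/
def hexNormSq (p : ℝ × ℝ) : ℝ := p.1 ^ 2 + p.1 * p.2 + p.2 ^ 2

lemma hexNormSq_neg (p : ℝ × ℝ) : hexNormSq (-p) = hexNormSq p := by
  simp [hexNormSq]

lemma hexNormSq_sub_comm (p q : ℝ × ℝ) : hexNormSq (p - q) = hexNormSq (q - p) := by
  rw [← hexNormSq_neg, neg_sub]

lemma hexNormSq_smul (t : ℝ) (p : ℝ × ℝ) : hexNormSq (t • p) = t ^ 2 * hexNormSq p := by
  simp only [hexNormSq, Prod.smul_fst, Prod.smul_snd, smul_eq_mul]; ring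

/-- The triangles with side lengths `(a, b, c)`, in lattice coordinates. -/
def tiles (a b c : ℝ) : Set (Set (ℝ × ℝ)) :=
  {T | ∃ P Q R, hexNormSq (Q - R) = a ^ 2 ∧ hexNormSq (P - R) = b ^ 2 ∧
    hexNormSq (P - Q) = c ^ 2 ∧ T = convexHull ℝ {P, Q, R}}

variable {a b c : ℝ}

lemma tiles_comm (a b c : ℝ) : tiles a b c = tiles b a c := by
  have hsub : ∀ a b : ℝ, tiles a b c ⊆ tiles b a c := by
    rintro a b T ⟨P, Q, R, ha, hb, hc, rfl⟩
    exact ⟨Q, P, R, hb, ha, by rw [hexNormSq_sub_comm, hc], by rw [insert_comm]⟩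
  exact (hsub a b).antisymm (hsub b a)

lemma image_mem_tiles {T : Set (ℝ × ℝ)} (hT : T ∈ tiles a b c) (g : (ℝ × ℝ) →ᵃ[ℝ] (ℝ × ℝ))
    (hg : ∀ p, hexNormSq (g.linear p) = hexNormSq p) : g '' T ∈ tiles a b c := by
  obtain ⟨P, Q, R, ha, hb, hc, rfl⟩ := hT
  refine ⟨g P, g Q, g R, ?_, ?_, ?_, by rw [g.image_convexHull, image_insert_eq, image_pair]⟩ <;>
    rw [← vsub_eq_sub, ← g.linearMap_vsub, hg, vsub_eq_sub] <;> assumption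

lemma three_mul_cross_sq (u v : ℝ × ℝ) : 3 * cross u v ^ 2 =
    4 * hexNormSq u * hexNormSq v - (hexNormSq u + hexNormSq v - hexNormSq (u - v)) ^ 2 := by
  simp only [cross, hexNormSq, Prod.fst_sub, Prod.snd_sub]; ring

lemma abs_cross_eq {P Q R : ℝ × ℝ} (ha : 0 ≤ a) (hb : 0 ≤ b)
    (h : c ^ 2 = a ^ 2 + b ^ 2 + a * b) (hQR : hexNormSq (Q - R) = a ^ 2)
    (hPR : hexNormSq (P - R) = b ^ 2) (hPQ : hexNormSq (P - Q) = c ^ 2) :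
    |cross (Q - P) (R - P)| = a * b := by
  have hsq := three_mul_cross_sq (Q - P) (R - P)
  rw [sub_sub_sub_cancel_right, hQR, hexNormSq_sub_comm, hPQ, hexNormSq_sub_comm, hPR] at hsq
  rw [← abs_of_nonneg (mul_nonneg ha hb), ← sq_eq_sq_iff_abs_eq_abs]
  rw [h] at hsq
  linear_combination hsq / 3

end Tiles

section Dissections

variable {n : ℕ} {D : Set (ℝ × ℝ)}

lemma CoveredBy.affine_image {a b c : ℝ} {𝒯 : Set (Set (ℝ × ℝ))} (h : CoveredBy 𝒯 n D)
    (g : (ℝ × ℝ) →ᵃ[ℝ] (ℝ × ℝ)) (hg : ∀ T ∈ 𝒯, g '' T ∈ tiles a b c) :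
    CoveredBy (tiles a b c) n (g '' D) :=
  h.image g (fun s hs => by rw [measure_image_affineMap, hs, mul_zero]) hg

lemma CoveredBy.translate {a b c : ℝ} (h : CoveredBy (tiles a b c) n D) (d : ℝ × ℝ) :
    CoveredBy (tiles a b c) n {p | p - d ∈ D} := by
  refine (h.affine_image (frame d (1, 0) (0, 1)) fun T hT =>
    image_mem_tiles hT _ fun p => ?_).mono fun p hp => ⟨p - d, hp, ?_⟩
  · simp [frame_linear_apply]
  · ext <;> simp [frame_apply]

-- `p ↦ (s - p.1 - p.2, p.1)` is the rotation by 120° that permutes the corners of `stdTriangle s`.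
lemma CoveredBy.rotate {a b c : ℝ} (h : CoveredBy (tiles a b c) n D) (s : ℝ) :
    CoveredBy (tiles a b c) n {p | (s - p.1 - p.2, p.1) ∈ D} := by
  refine (h.affine_image (frame (0, s) (0, -1) (1, -1)) fun T hT =>
    image_mem_tiles hT _ fun p => ?_).mono fun p hp => ⟨_, hp, ?_⟩
  · simp only [frame_linear_apply, hexNormSq, Prod.fst_add, Prod.snd_add, Prod.smul_fst,
      Prod.smul_snd, smul_eq_mul]
    ring
  · simp only [frame_apply]
    ext
    · simp
    · simp only [Prod.snd_add, Prod.smul_snd, smul_eq_mul]; ring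

lemma coveredBy_homothetic {a b c : ℝ} (hn : 0 < n) {P Q R : ℝ × ℝ}
    (hQR : hexNormSq (Q - R) = (n * a) ^ 2) (hPR : hexNormSq (P - R) = (n * b) ^ 2)
    (hPQ : hexNormSq (P - Q) = (n * c) ^ 2) :
    CoveredBy (tiles a b c) (n ^ 2) (convexHull ℝ {P, Q, R}) := by
  have hn' : (0 : ℝ) < n := Nat.cast_pos.2 hn
  set u : ℝ × ℝ := (n : ℝ)⁻¹ • (Q - P)
  set v : ℝ × ℝ := (n : ℝ)⁻¹ • (R - P)
  have hscale : ∀ (w : ℝ × ℝ) (t : ℝ), hexNormSq w = (n * t) ^ 2 →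
      hexNormSq ((n : ℝ)⁻¹ • w) = t ^ 2 := fun w t hw => by
    rw [hexNormSq_smul, hw]; field_simp
  have hu : hexNormSq u = c ^ 2 := hscale _ _ (hexNormSq_sub_comm P Q ▸ hPQ)
  have hv : hexNormSq v = b ^ 2 := hscale _ _ (hexNormSq_sub_comm P R ▸ hPR)
  have huv : hexNormSq (u - v) = a ^ 2 := by
    rw [← smul_sub, sub_sub_sub_cancel_right]
    exact hscale _ _ hQR
  have hhull : convexHull ℝ {P, Q, R} = frame P u v '' stdTriangle n := by
    simp only [frame_image_stdTriangle P u v hn', u, v, smul_inv_smul₀ hn'.ne', sub_add_cancel]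
  rw [hhull]
  have hcover := coveredBy_triangle_grid (𝒯 := {T | frame P u v '' T ∈ tiles a b c})
    (fun x y => ?_) (fun x y => ?_) n 0
  · refine (hcover.affine_image (frame P u v) fun T hT => hT).mono (image_mono ?_)
    exact fun p ⟨hx, hy, hxy⟩ => ⟨hx, hy, by rwa [zero_add]⟩
  all_goals
    refine ⟨_, _, _, ?_, ?_, ?_, frame_image_convexHull ..⟩ <;> simp only [frame_apply]
  · rw [← huv]; congr 1; module
  · rw [← hv, ← hexNormSq_neg]; congr 1; module
  · rw [← hu, ← hexNormSq_neg]; congr 1; module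
  · rw [← huv, ← hexNormSq_neg]; congr 1; module
  · rw [← hv]; congr 1; module
  · rw [← hu]; congr 1; module

lemma coveredBy_box {a b c : ℝ} (ha : 0 < a) (hb : 0 < b) (h : c ^ 2 = a ^ 2 + b ^ 2 + a * b)
    (x y : ℝ) : CoveredBy (tiles a b c) 2 (Icc x (x + a) ×ˢ Icc y (y + b)) := by
  have hlower : convexHull ℝ {(x + a, y + b), (x, y), (x + a, y)} ∈ tiles a b c := by
    refine ⟨_, _, _, ?_, ?_, ?_, rfl⟩ <;>
      simp only [hexNormSq, Prod.fst_sub, Prod.snd_sub, h] <;> ring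
  have hupper : convexHull ℝ {(x, y), (x + a, y + b), (x, y + b)} ∈ tiles a b c := by
    refine ⟨_, _, _, ?_, ?_, ?_, rfl⟩ <;>
      simp only [hexNormSq, Prod.fst_sub, Prod.snd_sub, h] <;> ring
  refine (CoveredBy.of_mem hlower).of_subset_union (.of_mem hupper) ?_
  rintro ⟨p, q⟩ ⟨⟨hx, hx'⟩, hy, hy'⟩
  dsimp only at hx hx' hy hy'
  have hab := mul_pos ha hb
  rcases le_total (a * (q - y)) (b * (p - x)) with hdiag | hdiag
  · have hsum : a * (q - y) + b * (x + a - p) + (b * (p - x) - a * (q - y)) = a * b := by ring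
    exact .inl (mem_convexHull_of_weights hsum hab (mul_nonneg ha.le (by linarith))
      (mul_nonneg hb.le (by linarith)) (by linarith) (by ring) (by ring))
  · have hsum : a * (y + b - q) + b * (p - x) + (a * (q - y) - b * (p - x)) = a * b := by ring
    exact .inr (mem_convexHull_of_weights hsum hab (mul_nonneg ha.le (by linarith))
      (mul_nonneg hb.le (by linarith)) (by linarith) (by ring) (by ring))

end Dissections

section Trapezoid

/-- The trapezoid of height `h` with legs at 60° and parallel sides `t` and `t + h`, in lattice
coordinates. -/
def trapezoid (t h : ℝ) : Set (ℝ × ℝ) := {p | 0 ≤ p.1 ∧ 0 ≤ p.2 ∧ p.2 ≤ h ∧ p.1 + p.2 ≤ t + h}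

lemma trapezoid_subset_union_triangles {a b c : ℝ} (ha : 0 < a) (hb : 0 < b)
    (h : c ^ 2 = a ^ 2 + b ^ 2 + a * b) :
    trapezoid (a ^ 2 + b ^ 2) (a * b) ⊆ convexHull ℝ {(0, 0), (c ^ 2, 0), (b ^ 2, a * b)} ∪
      (convexHull ℝ {(b ^ 2, a * b), (0, 0), (0, a * b)} ∪
        convexHull ℝ {(c ^ 2, 0), (b ^ 2, a * b), (a ^ 2 + b ^ 2, a * b)}) := by
  rintro ⟨x, y⟩ ⟨hx, hy, hyab, hxy⟩
  dsimp only at hx hy hyab hxy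
  rcases le_total (a * x) (b * y) with hleft | hleft
  · have hsum : a * x + b * (a * b - y) + (b * y - a * x) = a * b ^ 2 := by ring
    exact .inr (.inl (mem_convexHull_of_weights hsum (by positivity) (by positivity)
      (mul_nonneg hb.le (by linarith)) (by linarith) (by ring) (by ring)))
  rcases le_total (b * x + (a + b) * y) (b * c ^ 2) with hright | hright
  · have hsum : a * (b * c ^ 2 - (a + b) * y - b * x) + b * (a * x - b * y) + c ^ 2 * y =
        a * b * c ^ 2 := by rw [h]; ring
    have hc : 0 < c ^ 2 := by rw [h]; positivity
    exact .inl (mem_convexHull_of_weights hsum (by positivity) (mul_nonneg ha.le (by linarith))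
      (mul_nonneg hb.le (by linarith)) (by positivity) (by ring) (by ring))
  · have hsum : a * (a * b - y) + b * (c ^ 2 - x - y) + (b * x + (a + b) * y - b * c ^ 2) =
        a ^ 2 * b := by ring
    exact .inr (.inr (mem_convexHull_of_weights hsum (by positivity)
      (mul_nonneg ha.le (by linarith)) (mul_nonneg hb.le (by linarith)) (by linarith)
      (by rw [h]; ring) (by ring)))

end Trapezoid

section Strips

variable {a b c : ℕ}

lemma coveredBy_parallelogram (ha : 0 < a) (hb : 0 < b) (h : c ^ 2 = a ^ 2 + b ^ 2 + a * b)
    {n : ℕ} (hdvd : a.gcd b ∣ n) (hn : a.pred * b.pred ≤ n) (x y : ℝ) :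
    CoveredBy (tiles a b c) (2 * n) (Icc x (x + n) ×ˢ Icc y (y + a * b)) := by
  obtain ⟨i, j, rfl⟩ := Nat.exists_add_mul_eq_of_gcd_dvd_of_mul_pred_le a b n hdvd hn
  have ha' : (0 : ℝ) < a := Nat.cast_pos.2 ha
  have hb' : (0 : ℝ) < b := Nat.cast_pos.2 hb
  have h' : (c : ℝ) ^ 2 = a ^ 2 + b ^ 2 + a * b := by exact_mod_cast h
  have hbox : ∀ x y : ℝ, CoveredBy (tiles a b c) 2 (Icc x (x + b) ×ˢ Icc y (y + a)) := by
    rw [tiles_comm]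
    exact coveredBy_box hb' ha' (by rw [h']; ring)
  have hcover := (coveredBy_grid (coveredBy_box ha' hb' h') i a x y).of_subset_union
    (coveredBy_grid hbox j b (x + i * a) y) subset_rfl
  rw [show a * (i * 2) + b * (j * 2) = 2 * (i * a + j * b) by ring] at hcover
  refine hcover.mono ?_
  rw [mul_comm (b : ℝ) a, ← union_prod]
  refine prod_mono_left (Icc_subset_Icc_union_Icc.trans_eq' ?_)
  push_cast; ring_nf

lemma coveredBy_trapezoid_base (ha : 0 < a) (hb : 0 < b) (hc : 0 < c)
    (h : c ^ 2 = a ^ 2 + b ^ 2 + a * b) :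
    CoveredBy (tiles a b c) (c ^ 2 + (b ^ 2 + a ^ 2)) (trapezoid (a ^ 2 + b ^ 2) (a * b)) := by
  have h' : (c : ℝ) ^ 2 = a ^ 2 + b ^ 2 + a * b := by exact_mod_cast h
  refine .of_subset_union (coveredBy_homothetic hc ?_ ?_ ?_)
    (.of_subset_union (coveredBy_homothetic hb ?_ ?_ ?_) (coveredBy_homothetic ha ?_ ?_ ?_)
      subset_rfl)
    (trapezoid_subset_union_triangles (Nat.cast_pos.2 ha) (Nat.cast_pos.2 hb) h')
  all_goals simp only [hexNormSq, Prod.fst_sub, Prod.snd_sub, mul_pow, h']; ring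

lemma coveredBy_strip (ha : 0 < a) (hb : 0 < b) (hc : 0 < c)
    (h : c ^ 2 = a ^ 2 + b ^ 2 + a * b) {t : ℕ} (hdvd : a.gcd b ∣ t) (ht : c ^ 2 ≤ t) :
    CoveredBy (tiles a b c) (2 * t + a * b) (trapezoid t (a * b)) := by
  obtain ⟨d, rfl⟩ := Nat.exists_eq_add_of_le ht
  have h' : (c : ℝ) ^ 2 = a ^ 2 + b ^ 2 + a * b := by exact_mod_cast h
  have hgcd : a.gcd b ∣ a * b := (Nat.gcd_dvd_left a b).mul_right b
  have hgcd_sq : a.gcd b ∣ c ^ 2 := by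
    rw [h]
    exact (((Nat.gcd_dvd_left a b).pow two_ne_zero).add
      ((Nat.gcd_dvd_right a b).pow two_ne_zero)).add hgcd
  have hrect := coveredBy_parallelogram ha hb h
    (hgcd.add ((Nat.dvd_add_right hgcd_sq).1 hdvd))
    ((Nat.mul_le_mul a.pred_le b.pred_le).trans (Nat.le_add_right _ d)) 0 0
  have hcover := hrect.of_subset_union
    ((coveredBy_trapezoid_base ha hb hc h).translate (((a * b + d : ℕ) : ℝ), 0)) subset_rfl
  rw [show 2 * (a * b + d) + (c ^ 2 + (b ^ 2 + a ^ 2)) = 2 * (c ^ 2 + d) + a * b by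
    rw [h]; ring] at hcover
  refine hcover.mono ?_
  rintro p ⟨hx, hy, hyab, hxy⟩
  push_cast at hxy
  rcases le_total p.1 ((a * b + d : ℕ) : ℝ) with hd | hd
  · exact .inl ⟨⟨hx, by linarith⟩, hy, by linarith⟩
  · refine .inr ⟨by simpa using hd, by simpa using hy, by simpa using hyab, ?_⟩
    simp only [Prod.fst_sub, Prod.snd_sub]
    push_cast
    linarith

lemma coveredBy_trapezoid (ha : 0 < a) (hb : 0 < b) (hc : 0 < c)
    (h : c ^ 2 = a ^ 2 + b ^ 2 + a * b) {t : ℕ} (hdvd : a.gcd b ∣ t) (ht : c ^ 2 ≤ t) (k : ℕ) :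
    CoveredBy (tiles a b c) (k * (2 * t + k * (a * b))) (trapezoid t (k * (a * b))) := by
  induction k with
  | zero =>
    rw [zero_mul]
    refine .of_null (measure_mono_null (t := univ ×ˢ {0}) ?_ (by simp [Measure.volume_eq_prod]))
    rintro p ⟨-, hy, hy', -⟩
    exact ⟨trivial, le_antisymm (by simpa using hy') hy⟩
  | succ k ih =>
    have hgcd : a.gcd b ∣ k * (a * b) := ((Nat.gcd_dvd_left a b).mul_right b).mul_left k
    have hcover := (coveredBy_strip ha hb hc h (hdvd.add hgcd)
      (ht.trans (Nat.le_add_right _ _))).of_subset_union (ih.translate (0, a * b)) subset_rfl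
    rw [show 2 * (t + k * (a * b)) + a * b + k * (2 * t + k * (a * b)) =
      (k + 1) * (2 * t + (k + 1) * (a * b)) by ring] at hcover
    refine hcover.mono ?_
    rintro p ⟨hx, hy, hyk, hxy⟩
    push_cast at hyk hxy
    rcases le_total p.2 (a * b) with hab | hab
    · exact .inl ⟨hx, hy, hab, by push_cast; linarith⟩
    · refine .inr ⟨by simpa using hx, by simpa using hab, ?_, ?_⟩ <;>
        simp only [Prod.fst_sub, Prod.snd_sub] <;> linarith

lemma coveredBy_equilateral (ha : 0 < a) (hb : 0 < b) (hc : 0 < c)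
    (h : c ^ 2 = a ^ 2 + b ^ 2 + a * b) {k₁ k₂ k₃ : ℕ} (h₁ : c ^ 2 ≤ k₁ * (a * b))
    (h₂ : c ^ 2 ≤ k₂ * (a * b)) (h₃ : c ^ 2 ≤ k₃ * (a * b)) :
    CoveredBy (tiles a b c) ((k₁ + k₂ + k₃) ^ 2 * (a * b))
      (stdTriangle ((k₁ + k₂ + k₃) * (a * b))) := by
  have hgcd : ∀ k : ℕ, a.gcd b ∣ k * (a * b) :=
    fun k => ((Nat.gcd_dvd_left a b).mul_right b).mul_left k
  have hbottom := (coveredBy_trapezoid ha hb hc h (hgcd k₃) h₃ k₁).translate (k₂ * (a * b), 0)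
  have hleft := (coveredBy_trapezoid ha hb hc h (hgcd k₁) h₁ k₂).rotate ((k₁ + k₂) * (a * b))
  have hright := ((coveredBy_trapezoid ha hb hc h (hgcd k₂) h₂ k₃).rotate
    ((k₂ + k₃) * (a * b))).rotate ((k₁ + k₂ + k₃) * (a * b))
  have hcover := hbottom.of_subset_union (hleft.of_subset_union hright subset_rfl) subset_rfl
  rw [show k₁ * (2 * (k₃ * (a * b)) + k₁ * (a * b)) + (k₂ * (2 * (k₁ * (a * b)) + k₂ * (a * b)) +
    k₃ * (2 * (k₂ * (a * b)) + k₃ * (a * b))) = (k₁ + k₂ + k₃) ^ 2 * (a * b) by ring] at hcover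
  refine hcover.mono ?_
  rintro ⟨x, y⟩ ⟨hx, hy, hxy⟩
  dsimp only at hx hy hxy
  simp only [trapezoid, mem_union, mem_ofPred_eq, Prod.fst_sub, Prod.snd_sub]
  push_cast
  rcases le_total (x + y) ((k₁ + k₂) * (a * b)) with hlow | hhigh
  · rcases le_total x (k₂ * (a * b)) with hx' | hx'
    · right; left
      refine ⟨?_, ?_, ?_, ?_⟩ <;> linarith
    · left
      refine ⟨?_, ?_, ?_, ?_⟩ <;> linarith
  · rcases le_total y (k₁ * (a * b)) with hy' | hy'
    · left
      refine ⟨?_, ?_, ?_, ?_⟩ <;> linarith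
    · right; right
      refine ⟨?_, ?_, ?_, ?_⟩ <;> linarith

end Strips

section MainTriangle

lemma nonneg_and_le_of_mem_convexHull_axes {s t : ℝ} (hs : 0 ≤ s) (ht : 0 ≤ t) {p : ℝ × ℝ}
    (hp : p ∈ convexHull ℝ {(s, 0), (0, t), (0, 0)}) :
    0 ≤ p.1 ∧ 0 ≤ p.2 ∧ t * p.1 + s * p.2 ≤ s * t := by
  have hframe := frame_image_stdTriangle (0 : ℝ × ℝ) (s, 0) (0, t) one_pos
  rw [one_smul, one_smul, add_zero, add_zero, insert_comm, pair_comm] at hframe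
  obtain ⟨q, ⟨hq₁, hq₂, hq⟩, rfl⟩ := hframe.symm.subset hp
  have hst := mul_le_mul_of_nonneg_left hq (mul_nonneg hs ht)
  simp only [frame_apply, Prod.fst_add, Prod.snd_add, Prod.smul_fst, Prod.smul_snd, smul_eq_mul,
    mul_zero, add_zero, zero_add]
  exact ⟨by positivity, by positivity, by linarith⟩

/-- The triangle to be tiled, in lattice coordinates: its angle of 60° is at the origin. -/
def mainTriangle (a b m : ℝ) : Set (ℝ × ℝ) :=
  convexHull ℝ {(b * (b + 2 * a) * m, 0), (0, a * (a + 2 * b) * m), (0, 0)}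

lemma mainTriangle_subset_union_triangles {a b m : ℝ} (ha : 0 < a) (hb : 0 < b) (hm : 0 < m) :
    mainTriangle a b m ⊆ stdTriangle (2 * (a * b * m)) ∪
      (convexHull ℝ {(b * (b + 2 * a) * m, 0), (0, a * (a + 2 * b) * m),
        (a * b * m, a * b * m)} ∪
      (convexHull ℝ {(b * (b + 2 * a) * m, 0), (a * b * m, a * b * m), (2 * (a * b * m), 0)} ∪
        convexHull ℝ {(a * b * m, a * b * m), (0, a * (a + 2 * b) * m),
          (0, 2 * (a * b * m))})) := by
  rintro ⟨x, y⟩ hp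
  obtain ⟨hx, hy, hxy⟩ := nonneg_and_le_of_mem_convexHull_axes (by positivity) (by positivity) hp
  have hPQ : a * (a + 2 * b) * x + b * (b + 2 * a) * y ≤ a * b * (a + 2 * b) * (b + 2 * a) * m :=
    le_of_mul_le_mul_left (by linarith) hm
  rcases le_total (x + y) (2 * (a * b * m)) with hlow | hhigh
  · exact .inl ⟨hx, hy, hlow⟩
  refine .inr ?_
  rcases le_total (a * x + (a + b) * y) (a * b * (2 * a + b) * m) with hP | hP
  · have hsum : a * (x + y - 2 * (a * b * m)) + b * y +
        (a * b * (2 * a + b) * m - (a * x + (a + b) * y)) = a * b ^ 2 * m := by ring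
    exact .inr (.inl (mem_convexHull_of_weights hsum (by positivity)
      (mul_nonneg ha.le (by linarith)) (by positivity) (by linarith) (by ring) (by ring)))
  rcases le_total ((a + b) * x + b * y) (a * b * (a + 2 * b) * m) with hQ | hQ
  · have hsum : a * x + b * (x + y - 2 * (a * b * m)) +
        (a * b * (a + 2 * b) * m - ((a + b) * x + b * y)) = a ^ 2 * b * m := by ring
    exact .inr (.inr (mem_convexHull_of_weights hsum (by positivity) (by positivity)
      (mul_nonneg hb.le (by linarith)) (by linarith) (by ring) (by ring)))
  · have hsum : a * ((a + b) * x + b * y - a * b * (a + 2 * b) * m) +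
        b * (a * x + (a + b) * y - a * b * (2 * a + b) * m) +
        (a * b * (a + 2 * b) * (b + 2 * a) * m - a * (a + 2 * b) * x - b * (b + 2 * a) * y) =
        a * b * (a ^ 2 + b ^ 2 + a * b) * m := by ring
    exact .inl (mem_convexHull_of_weights hsum (by positivity) (mul_nonneg ha.le (by linarith))
      (mul_nonneg hb.le (by linarith)) (by linarith) (by ring) (by ring))

lemma pos_of_sq_le_div_mul {a b c m : ℕ} (hc : 0 < c) (hm : c ^ 2 ≤ 2 * m / 3 * (a * b)) :
    0 < a ∧ 0 < b ∧ 0 < m := by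
  refine ⟨?_, ?_, ?_⟩ <;> by_contra! h₀ <;> simp [Nat.le_zero.1 h₀, hc.ne'] at hm

lemma coveredBy_mainTriangle {a b c m : ℕ} (hc : 0 < c) (h : c ^ 2 = a ^ 2 + b ^ 2 + a * b)
    (hm : c ^ 2 ≤ 2 * m / 3 * (a * b)) :
    CoveredBy (tiles a b c) ((a + 2 * b) * (b + 2 * a) * m ^ 2) (mainTriangle a b m) := by
  obtain ⟨ha, hb, hm_pos⟩ := pos_of_sq_le_div_mul hc hm
  have h' : (c : ℝ) ^ 2 = a ^ 2 + b ^ 2 + a * b := by exact_mod_cast h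
  -- The pinwheel needs `2 * m = k₁ + k₂ + k₃` with each part at least `2 * m / 3`, rounded down.
  set k := 2 * m / 3
  have hk : k + k + (2 * m - 2 * k) = 2 * m := by omega
  have hequilateral := coveredBy_equilateral ha hb hc h hm hm
    (hm.trans (Nat.mul_le_mul_right _ (by omega : k ≤ 2 * m - 2 * k)))
  have hsub := mainTriangle_subset_union_triangles (Nat.cast_pos.2 ha) (Nat.cast_pos.2 hb)
    (Nat.cast_pos.2 hm_pos)
  rw [← Nat.cast_add, ← Nat.cast_add, hk, Nat.cast_mul, Nat.cast_two,
    show 2 * (m : ℝ) * (a * b) = 2 * (a * b * m) by ring] at hequilateral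
  rw [show (a + 2 * b) * (b + 2 * a) * m ^ 2 =
    (2 * m) ^ 2 * (a * b) + ((c * m) ^ 2 + ((b * m) ^ 2 + (a * m) ^ 2)) by
      rw [mul_pow c, h]; ring]
  refine hequilateral.of_subset_union (.of_subset_union (coveredBy_homothetic ?_ ?_ ?_ ?_)
    (.of_subset_union (coveredBy_homothetic ?_ ?_ ?_ ?_) (coveredBy_homothetic ?_ ?_ ?_ ?_)
      subset_rfl) subset_rfl) hsub
  any_goals positivity
  all_goals simp only [hexNormSq, Prod.fst_sub, Prod.snd_sub, Nat.cast_mul, mul_pow, h']; ring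

end MainTriangle

section ExactTiling

lemma isClosed_of_mem_tiles {a b c : ℝ} {T : Set (ℝ × ℝ)} (hT : T ∈ tiles a b c) : IsClosed T := by
  obtain ⟨P, Q, R, -, -, -, rfl⟩ := hT
  exact isClosed_convexHull_triple P Q R

lemma volume_of_mem_tiles {a b c : ℝ} (ha : 0 ≤ a) (hb : 0 ≤ b) (h : c ^ 2 = a ^ 2 + b ^ 2 + a * b)
    {T : Set (ℝ × ℝ)} (hT : T ∈ tiles a b c) :
    volume T = ENNReal.ofReal (a * b) * volume (stdTriangle 1) := by
  obtain ⟨P, Q, R, hQR, hPR, hPQ, rfl⟩ := hT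
  rw [volume_convexHull_triple, abs_cross_eq ha hb h hQR hPR hPQ]

lemma subset_closure_interior_of_mem_tiles {a b c : ℝ} (ha : 0 < a) (hb : 0 < b)
    (h : c ^ 2 = a ^ 2 + b ^ 2 + a * b) {T : Set (ℝ × ℝ)} (hT : T ∈ tiles a b c) :
    T ⊆ closure (interior T) := by
  obtain ⟨P, Q, R, hQR, hPR, hPQ, rfl⟩ := hT
  refine convexHull_triple_subset_closure_interior (abs_ne_zero.1 ?_)
  rw [abs_cross_eq ha.le hb.le h hQR hPR hPQ]
  positivity

lemma cross_mainTriangle (a b m : ℝ) :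
    cross ((0, a * (a + 2 * b) * m) - (b * (b + 2 * a) * m, 0))
      ((0, 0) - (b * (b + 2 * a) * m, 0)) = (a + 2 * b) * (b + 2 * a) * m ^ 2 * (a * b) := by
  simp only [cross, Prod.fst_sub, Prod.snd_sub]
  ring

lemma exists_tiling_mainTriangle {a b c m : ℕ} (hc : 0 < c)
    (h : c ^ 2 = a ^ 2 + b ^ 2 + a * b) (hm : c ^ 2 ≤ 2 * m / 3 * (a * b)) :
    ∃ T : Fin ((a + 2 * b) * (b + 2 * a) * m ^ 2) → Set (ℝ × ℝ), (∀ i, T i ∈ tiles a b c) ∧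
      mainTriangle a b m = ⋃ i, T i ∧ ∀ i j, i ≠ j → interior (T i) ∩ interior (T j) = ∅ := by
  obtain ⟨ha, hb, hm_pos⟩ := pos_of_sq_le_div_mul hc hm
  have ha' : (0 : ℝ) < a := Nat.cast_pos.2 ha
  have hb' : (0 : ℝ) < b := Nat.cast_pos.2 hb
  have h' : (c : ℝ) ^ 2 = a ^ 2 + b ^ 2 + a * b := by exact_mod_cast h
  have hcross := cross_mainTriangle a b m
  have hregular : mainTriangle a b m ⊆ closure (interior (mainTriangle a b m)) :=
    convexHull_triple_subset_closure_interior (hcross ▸ by positivity)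
  refine (coveredBy_mainTriangle hc h hm).exists_tiling (isClosed_convexHull_triple _ _ _) hregular
    (fun T hT => ⟨isClosed_of_mem_tiles hT, subset_closure_interior_of_mem_tiles ha' hb' h' hT⟩)
    (fun T => volume_of_mem_tiles ha'.le hb'.le h')
    (ENNReal.mul_ne_top ENNReal.ofReal_ne_top volume_stdTriangle_one_ne_top) ?_
  rw [mainTriangle, volume_convexHull_triple, hcross, abs_of_pos (by positivity),
    ENNReal.ofReal_mul (by positivity), mul_assoc, ← ENNReal.ofReal_natCast]
  push_cast
  rfl

end ExactTiling

section Congruence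

variable {E : Type*} [NormedAddCommGroup E] [InnerProductSpace ℝ E]

lemma exists_linearIsometryEquiv_map_pair {u v u' v' : E} (hu : ‖u‖ = ‖u'‖) (hv : ‖v‖ = ‖v'‖)
    (huv : ‖u - v‖ = ‖u' - v'‖) : ∃ L : E ≃ₗᵢ[ℝ] E, L u = u' ∧ L v = v' := by
  set L := (ℝ ∙ (u - u'))ᗮ.reflection
  have hLu : L u = u' := Submodule.reflection_sub hu
  have hLv : ‖L v‖ = ‖v'‖ := (L.norm_map v).trans hv
  have hinner : inner ℝ u' (L v) = inner ℝ u' v' := by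
    rw [real_inner_eq_norm_mul_self_add_norm_mul_self_sub_norm_sub_mul_self_div_two,
      real_inner_eq_norm_mul_self_add_norm_mul_self_sub_norm_sub_mul_self_div_two, hLv, ← huv,
      ← L.norm_map (u - v), map_sub, hLu]
  have hmem : u' ∈ (ℝ ∙ (L v - v'))ᗮ := by
    rw [Submodule.mem_orthogonal_singleton_iff_inner_left, inner_sub_right, hinner, sub_self]
  refine ⟨L.trans (ℝ ∙ (L v - v'))ᗮ.reflection, ?_, Submodule.reflection_sub hLv⟩
  rw [LinearIsometryEquiv.trans_apply, hLu]
  exact Submodule.reflection_mem_subspace_eq_self hmem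

lemma exists_affineIsometryEquiv_map_triple {P Q R P' Q' R' : E} (hQR : dist Q R = dist Q' R')
    (hPR : dist P R = dist P' R') (hPQ : dist P Q = dist P' Q') :
    ∃ F : E ≃ᵃⁱ[ℝ] E, F P = P' ∧ F Q = Q' ∧ F R = R' := by
  obtain ⟨L, hLP, hLQ⟩ := exists_linearIsometryEquiv_map_pair (u := P - R) (v := Q - R)
    (u' := P' - R') (v' := Q' - R') (by rwa [← dist_eq_norm, ← dist_eq_norm])
    (by rwa [← dist_eq_norm, ← dist_eq_norm])
    (by rwa [sub_sub_sub_cancel_right, sub_sub_sub_cancel_right, ← dist_eq_norm, ← dist_eq_norm])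
  refine ⟨((AffineIsometryEquiv.vaddConst ℝ R).symm.trans L.toAffineIsometryEquiv).trans
    (AffineIsometryEquiv.vaddConst ℝ R'), ?_, ?_, ?_⟩ <;>
    simp [hLP, hLQ]

lemma IsTriangle.exists_isometryEquiv {p q r : ℝ} {S T : Set Plane} (hS : IsTriangle p q r S)
    (hT : IsTriangle p q r T) : ∃ F : Plane ≃ᵢ Plane, F '' S = T := by
  obtain ⟨P, Q, R, hQR, hPR, hPQ, rfl⟩ := hS
  obtain ⟨P', Q', R', hQR', hPR', hPQ', rfl⟩ := hT
  obtain ⟨F, hP, hQ, hR⟩ := exists_affineIsometryEquiv_map_triple (hQR.trans hQR'.symm)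
    (hPR.trans hPR'.symm) (hPQ.trans hPQ'.symm)
  refine ⟨F.toIsometryEquiv, ?_⟩
  have himage := F.toAffineEquiv.toAffineMap.image_convexHull {P, Q, R}
  rw [image_insert_eq, image_pair] at himage
  simpa [hP, hQ, hR] using himage

end Congruence

section Plane

lemma TilesInto.of_isTriangle {S : Set Plane} {N : ℕ} [NeZero N] {p q r : ℝ} {T : Fin N → Set Plane}
    (hT : ∀ i, IsTriangle p q r (T i)) (hS : S = ⋃ i, T i)
    (hdisj : ∀ i j, i ≠ j → interior (T i) ∩ interior (T j) = ∅) : TilesInto S N p q r := by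
  choose F hF using fun i => (hT 0).exists_isometryEquiv (hT i)
  refine ⟨F, T 0, hT 0, ?_, ?_⟩ <;> simpa only [hF]

lemma TilesInto.image {S : Set Plane} {N : ℕ} {p q r : ℝ} (h : TilesInto S N p q r)
    (F : Plane ≃ᵢ Plane) : TilesInto (F '' S) N p q r := by
  obtain ⟨f, Δ, hΔ, rfl, hdisj⟩ := h
  have himage (i) : (f i).trans F '' Δ = F '' (f i '' Δ) := image_comp F (f i) Δ
  refine ⟨fun i => (f i).trans F, Δ, hΔ, by simp only [himage, image_iUnion], fun i j hij => ?_⟩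
  have hinterior (s : Set Plane) : interior (F '' s) = F '' interior s :=
    (F.toHomeomorph.image_interior s).symm
  rw [himage, himage, hinterior, hinterior, ← image_inter F.injective, hdisj i j hij, image_empty]

/-- The isometry from the plane with the norm given by `hexNormSq` to the Euclidean plane. -/
def hexMap : (ℝ × ℝ) →ᵃ[ℝ] Plane := frame 0 (pt 1 0) (pt (1 / 2) (√3 / 2))

lemma dist_hexMap_sq (p q : ℝ × ℝ) : dist (hexMap p) (hexMap q) ^ 2 = hexNormSq (p - q) := by
  rw [EuclideanSpace.dist_eq, Real.sq_sqrt (by positivity), Fin.sum_univ_two]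
  have h3 : (√3) ^ 2 = 3 := Real.sq_sqrt zero_le_three
  have hcoord (p : ℝ × ℝ) : hexMap p 0 = p.1 + p.2 / 2 ∧ hexMap p 1 = √3 / 2 * p.2 := by
    constructor <;> simp [hexMap, frame_apply, pt] <;> ring
  rw [Real.dist_eq, Real.dist_eq, sq_abs, sq_abs, (hcoord p).1, (hcoord q).1, (hcoord p).2,
    (hcoord q).2, hexNormSq, Prod.fst_sub, Prod.snd_sub]
  linear_combination (p.2 - q.2) ^ 2 / 4 * h3

lemma dist_hexMap {p q : ℝ × ℝ} {d : ℝ} (hd : 0 ≤ d) (h : hexNormSq (p - q) = d ^ 2) :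
    dist (hexMap p) (hexMap q) = d := by
  rwa [← dist_hexMap_sq, sq_eq_sq₀ dist_nonneg hd] at h

lemma hexMap_injective : Function.Injective hexMap := by
  intro p q hpq
  have hzero := dist_hexMap_sq p q
  rw [hpq, dist_self, hexNormSq, Prod.fst_sub, Prod.snd_sub] at hzero
  have hsnd : p.2 - q.2 = 0 := pow_eq_zero_iff two_ne_zero |>.1 <| le_antisymm
    (by nlinarith [sq_nonneg (2 * (p.1 - q.1) + (p.2 - q.2))]) (sq_nonneg _)
  have hfst : p.1 - q.1 = 0 := by simpa [hsnd] using hzero.symm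
  exact Prod.ext (sub_eq_zero.1 hfst) (sub_eq_zero.1 hsnd)

lemma isTriangle_hexMap_image {a b c : ℝ} (ha : 0 ≤ a) (hb : 0 ≤ b) (hc : 0 ≤ c)
    {T : Set (ℝ × ℝ)} (hT : T ∈ tiles a b c) : IsTriangle a b c (hexMap '' T) := by
  obtain ⟨P, Q, R, hQR, hPR, hPQ, rfl⟩ := hT
  exact ⟨hexMap P, hexMap Q, hexMap R, dist_hexMap ha hQR, dist_hexMap hb hPR, dist_hexMap hc hPQ,
    frame_image_convexHull _ _ _ P Q R⟩

lemma mainTriangle_mem_tiles {a b c : ℝ} (h : c ^ 2 = a ^ 2 + b ^ 2 + a * b) (m : ℝ) :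
    mainTriangle a b m ∈ tiles (a * (a + 2 * b) * m) (b * (b + 2 * a) * m) (c ^ 2 * m) := by
  refine ⟨_, _, _, ?_, ?_, ?_, rfl⟩ <;>
    simp only [hexNormSq, h, Prod.fst_sub, Prod.snd_sub] <;> ring

end Plane

section Threshold

lemma three_le_of_sq_eq {a b c : ℕ} (ha : 0 < a) (hb : 0 < b)
    (h : c ^ 2 = a ^ 2 + b ^ 2 + a * b) : 3 ≤ a := by
  by_contra! ha3
  interval_cases a
  · have hlow : b < c := by nlinarith
    have hhigh : c < b + 1 := by nlinarith
    lia
  · have hlow : b + 1 < c := by nlinarith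
    have hhigh : c < b + 2 := by nlinarith
    lia

lemma sq_le_div_mul_of_lt {a b c m : ℕ} (ha : 0 < a) (hb : 0 < b)
    (h : c ^ 2 = a ^ 2 + b ^ 2 + a * b) (hm : (b : ℤ) * c - b - c < m) :
    c ^ 2 ≤ 2 * m / 3 * (a * b) := by
  have ha3 : 3 ≤ a := three_le_of_sq_eq ha hb h
  have hb3 : 3 ≤ b := three_le_of_sq_eq hb ha (by rw [h]; ring)
  have hac : a < c := by nlinarith
  have hcab : c ≤ a + b := by nlinarith
  have hab : 3 * (a + b) ≤ 2 * (a * b) := by nlinarith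
  have hmc : 2 * c ≤ m + 2 := by
    zify at hb3 hac ha3 ⊢
    nlinarith [mul_le_mul_of_nonneg_right hb3 (by lia : (0 : ℤ) ≤ c - 1)]
  have hk : 2 * c ≤ 3 * (2 * m / 3) := by lia
  have hcab' : 3 * c ≤ 2 * (a * b) := by linarith
  linarith [Nat.mul_le_mul hk hcab']

end Threshold

theorem stmt11_general (a b c : ℕ) (hc : 0 < c) (h : c ^ 2 = a ^ 2 + b ^ 2 + a * b)
    (m : ℕ) (hm : c ^ 2 ≤ 2 * m / 3 * (a * b)) :
    ∀ Δ : Set Plane,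
      IsTriangle ((a : ℝ) * (a + 2 * b) * m) ((b : ℝ) * (b + 2 * a) * m)
        ((c : ℝ) ^ 2 * m) Δ →
      TilesInto Δ ((a + 2 * b) * (b + 2 * a) * m ^ 2) a b c := by
  intro Δ hΔ
  obtain ⟨ha, hb, hm_pos⟩ := pos_of_sq_le_div_mul hc hm
  have : NeZero ((a + 2 * b) * (b + 2 * a) * m ^ 2) := ⟨by positivity⟩
  obtain ⟨T, hT, hunion, hdisj⟩ := exists_tiling_mainTriangle hc h hm
  have htiles : TilesInto (hexMap '' mainTriangle a b m) ((a + 2 * b) * (b + 2 * a) * m ^ 2)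
      a b c := .of_isTriangle
    (fun i => isTriangle_hexMap_image a.cast_nonneg b.cast_nonneg c.cast_nonneg (hT i))
    (by rw [hunion, image_iUnion])
    fun i j hij => interior_image_inter_interior_image_eq_empty
      hexMap.continuous_of_finiteDimensional hexMap_injective (hdisj i j hij)
  have hmain : IsTriangle (a * (a + 2 * b) * m) (b * (b + 2 * a) * m) (c ^ 2 * m)
      (hexMap '' mainTriangle a b m) :=
    isTriangle_hexMap_image (by positivity) (by positivity) (by positivity)
      (mainTriangle_mem_tiles (by exact_mod_cast h) m)
  obtain ⟨F, rfl⟩ := hmain.exists_isometryEquiv hΔ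
  exact htiles.image F

theorem stmt11 (a b c : ℕ) (ha : 0 < a) (hb : 0 < b) (hc : 0 < c)
    (hab : Nat.Coprime a b) (hac : Nat.Coprime a c) (hbc : Nat.Coprime b c)
    (h : c ^ 2 = a ^ 2 + b ^ 2 + a * b)
    (m : ℕ) (hm : (b : ℤ) * c - b - c < (m : ℤ)) :
    ∀ Δ : Set Plane,
      IsTriangle ((a : ℝ) * (a + 2 * b) * m) ((b : ℝ) * (b + 2 * a) * m)
        ((c : ℝ) ^ 2 * m) Δ →
      TilesInto Δ ((a + 2 * b) * (b + 2 * a) * m ^ 2) a b c :=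
  stmt11_general a b c hc h m (sq_le_div_mul_of_lt ha hb h hm)
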